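/- Let 𝒲 = [e_n] be a Banach space with a Schauder basis and suppose 𝒲 = [e_n] is α-tight for a countable ordinal α. Then no block subspace 𝒴 = [y_n] of 𝒲 is β-minimal for any ordinal β > α, and 𝒲 contains no minimal infinite-dimensional closed subspace. -/

import Mathlib

open Filter Topology

namespace Rosendal

variable {𝒲 : Type} [NormedAddCommGroup 𝒲] [NormedSpace ℝ 𝒲]

/-- `(e n)` is a Schauder basis of the Banach space `𝒲`: every vector has a unique
representation as a norm-convergent series `∑ a n • e n`. -/
def IsSchauderBasis (e : ℕ → 𝒲) : Prop :=
  ∀ x : 𝒲, ∃! a : ℕ → ℝ,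
    Tendsto (fun N => ∑ i ∈ Finset.range N, a i • e i) atTop (𝓝 x)

/-- `x` is a linear combination of the vectors `b i`, `i ∈ s`. -/
def SuppIn (b : ℕ → 𝒲) (x : 𝒲) (s : Finset ℕ) : Prop :=
  ∃ a : ℕ → ℝ, x = ∑ i ∈ s, a i • b i

/-- `(y n)` is a block sequence with respect to the basic sequence `(b n)`: a sequence of
nonzero finite linear combinations of the `b i` with successive supports. -/
def IsBlockSeq (b : ℕ → 𝒲) (y : ℕ → 𝒲) : Prop :=
  (∀ n, y n ≠ 0) ∧
  ∃ D : ℕ → Finset ℕ, (∀ n, SuppIn b (y n) (D n)) ∧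
    ∀ n, ∀ i ∈ D n, ∀ j ∈ D (n + 1), i < j

/-- The closed linear span of a set. -/
noncomputable def closedSpan (S : Set 𝒲) : Submodule ℝ 𝒲 :=
  (Submodule.span ℝ S).topologicalClosure

/-- `(x i)_{i<k} ∼_K (y i)_{i<k}`:
`(1/K)‖∑ a i • x i‖ ≤ ‖∑ a i • y i‖ ≤ K‖∑ a i • x i‖` for all scalars. -/
def SeqEquiv (K : ℝ) (k : ℕ) (x y : ℕ → 𝒲) : Prop :=
  ∀ a : ℕ → ℝ,
    (1 / K) * ‖∑ i ∈ Finset.range k, a i • x i‖ ≤ ‖∑ i ∈ Finset.range k, a i • y i‖ ∧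
    ‖∑ i ∈ Finset.range k, a i • y i‖ ≤ K * ‖∑ i ∈ Finset.range k, a i • x i‖

/-- The tree `T((x n), Y, K)` of finite sequences `(y 0, …, y k)` of vectors of `Y` that are
`K`-equivalent to `(x 0, …, x k)`, ordered by end-extension. -/
def embTree (x : ℕ → 𝒲) (Y : Set 𝒲) (K : ℝ) : Set (List 𝒲) :=
  {l | (∀ v ∈ l, v ∈ Y) ∧ SeqEquiv K l.length (fun i => l.getD i 0) x}

open Classical in
/-- The rank of a tree of finite sequences: if the proper end-extension relation is
well-founded (equivalently, for trees, there is no infinite branch), this is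
`sup { ρ(s) + 1 : s ∈ T }` where `ρ` is the usual rank function; otherwise it is `∞ = ⊤`. -/
noncomputable def treeRank (T : Set (List 𝒲)) : WithTop Ordinal :=
  if h : WellFounded (fun t s : T => s.val <+: t.val ∧ s.val ≠ t.val) then
    ((⨆ s : T, Order.succ ((h.apply s).rank) : Ordinal) : WithTop Ordinal)
  else ⊤

open Classical in
/-- The embeddability index `Emb((x n), Y) = sup_{K ≥ 1} rank T((x n), Y, K)`. -/
noncomputable def embIndex (x : ℕ → 𝒲) (Y : Set 𝒲) : WithTop Ordinal :=
  if ∃ K : ℝ, 1 ≤ K ∧ treeRank (embTree x Y K) = ⊤ then ⊤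
  else ((sSup {o : Ordinal | ∃ K : ℝ, 1 ≤ K ∧
      (o : WithTop Ordinal) = treeRank (embTree x Y K)} : Ordinal) : WithTop Ordinal)

/-- `(I m)` is a sequence of successive nonempty finite intervals `I 0 < I 1 < …` of `ℕ`. -/
def IntervalSeq (I : ℕ → Finset ℕ) : Prop :=
  (∀ m, ∃ a b : ℕ, a ≤ b ∧ I m = Finset.Icc a b) ∧
  ∀ m, ∀ i ∈ I m, ∀ j ∈ I (m + 1), i < j

/-- The closed subspace `[b n : n ∉ ⋃_{m ∈ A} I m]`. -/
noncomputable def residualSpace (b : ℕ → 𝒲) (I : ℕ → Finset ℕ) (A : Set ℕ) :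
    Submodule ℝ 𝒲 :=
  closedSpan {v | ∃ n : ℕ, (∀ m ∈ A, n ∉ I m) ∧ v = b n}

/-- The space `[b n]` with its basis `(b n)` is `α`-tight. -/
def IsAlphaTight (b : ℕ → 𝒲) (α : Ordinal) : Prop :=
  ∀ y : ℕ → 𝒲, IsBlockSeq b y →
    ∃ I : ℕ → Finset ℕ, IntervalSeq I ∧
      ∀ A : Set ℕ, A.Infinite →
        embIndex y (residualSpace b I A : Set 𝒲) ≤ (α : WithTop Ordinal)

/-- The space `[b n]` with its basis `(b n)` is `α`-minimal: every block subspace `[z n]`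
`α`-embeds into every infinite-dimensional subspace `Y ⊆ [b n]`. -/
def IsAlphaMinimal (b : ℕ → 𝒲) (α : Ordinal) : Prop :=
  ∀ z : ℕ → 𝒲, IsBlockSeq b z →
    ∀ Y : Submodule ℝ 𝒲, (Y : Set 𝒲) ⊆ (closedSpan (Set.range b) : Set 𝒲) →
      ¬FiniteDimensional ℝ Y →
        (α : WithTop Ordinal) ≤ embIndex z (Y : Set 𝒲)

/-- `X` embeds isomorphically into `Y` (as an isomorphism onto its image). -/
def LinIsoEmbeds (X Y : Submodule ℝ 𝒲) : Prop :=
  ∃ T : X →ₗ[ℝ] 𝒲, (∀ v : X, T v ∈ Y) ∧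
    ∃ c C : ℝ, 0 < c ∧ ∀ v : X, c * ‖v‖ ≤ ‖T v‖ ∧ ‖T v‖ ≤ C * ‖v‖

/-- `X` is a minimal space: it embeds isomorphically into every infinite-dimensional
closed subspace of itself. -/
def IsMinimalSpace (X : Submodule ℝ 𝒲) : Prop :=
  ∀ Y : Submodule ℝ 𝒲, Y ≤ X → IsClosed (Y : Set 𝒲) → ¬FiniteDimensional ℝ Y →
    LinIsoEmbeds X Y

/-- `F` embeds into `Y` with constant `K`. -/
def KEmbeds (K : ℝ) (F Y : Submodule ℝ 𝒲) : Prop :=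
  ∃ T : F →ₗ[ℝ] 𝒲, (∀ v : F, T v ∈ Y) ∧
    ∀ v : F, (1 / K) * ‖v‖ ≤ ‖T v‖ ∧ ‖T v‖ ≤ K * ‖v‖

end Rosendal

namespace Rosendal

/-!
Given a block sequence `(y n)` and the intervals `I 0 < I 1 < …` that witness tightness for it,
choose alternately infinite sets `A`, `B` of indices such that the support of `y n` misses `I m`
for all `m ∈ A`, `n ∈ B`. Then `[y n : n ∈ B]` lies in `[e n : n ∉ ⋃_{m ∈ A} I m]`, so `(y n)` has
embeddability index at most `α` in it, and `[y n]` is not `β`-minimal for `β > α`.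

For a minimal `X` one finds a block sequence `(z n)` whose index in `[z n : n ∈ B]` is `∞` for every
infinite `B`. A gliding hump gives vectors `x n` of `X` equivalent to a block sequence `(z n)`. By
minimality `X`, and with it `(x n)`, embeds into `[x n : n ∈ B]`, and after a small perturbation
into the algebraic span of `x n`, `n ∈ B`. The equivalence of `(x n)` and `(z n)` transports this
copy of `(x n)` into the span of `z n`, `n ∈ B`.
-/

/-! ### Rank of trees and the embeddability index -/

section Rank

theorem acc_rank_le_of_map_rel.{u} {A B : Type u} {r : A → A → Prop} {s : B → B → Prop}
    {f : A → B} (hf : ∀ {a b}, r a b → s (f a) (f b)) {a : A} (ha : Acc r a)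
    (hfa : Acc s (f a)) : ha.rank ≤ hfa.rank := by
  induction ha with
  | intro a h ih =>
    rw [Acc.rank_eq]
    refine Ordinal.iSup_le fun ⟨b, hb⟩ => Order.succ_le_of_lt ?_
    exact (ih b hb _).trans_lt (Acc.rank_lt_of_rel hfa (hf hb))

variable {𝒲 : Type}

theorem treeRank_mono {T T' : Set (List 𝒲)} (h : T ⊆ T') : treeRank T ≤ treeRank T' := by
  unfold treeRank
  split_ifs with hT hT' hT'
  · refine WithTop.coe_le_coe.2 (Ordinal.iSup_le fun t => ?_)
    refine le_trans (Order.succ_le_succ ?_) (Ordinal.le_iSup _ (Set.inclusion h t))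
    exact acc_rank_le_of_map_rel (f := Set.inclusion h) id (hT.apply t) _
  · exact le_top
  · exact absurd (InvImage.wf (Set.inclusion h) hT') hT
  · exact le_rfl

theorem treeRank_eq_top_of_branch {T : Set (List 𝒲)} (w : ℕ → 𝒲)
    (hw : ∀ k, (List.range k).map w ∈ T) : treeRank T = ⊤ := by
  refine dif_neg fun hwf => ?_
  refine (wellFounded_iff_isEmpty_descending_chain.1 hwf).false ⟨fun k => ⟨_, hw k⟩, fun k => ?_⟩
  refine ⟨by simp [List.range_succ], fun h => ?_⟩
  simpa using congrArg List.length h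

variable [NormedAddCommGroup 𝒲] [NormedSpace ℝ 𝒲]

theorem embIndex_le_iff {x : ℕ → 𝒲} {Y : Set 𝒲} {a : WithTop Ordinal} :
    embIndex x Y ≤ a ↔ ∀ K : ℝ, 1 ≤ K → treeRank (embTree x Y K) ≤ a := by
  unfold embIndex
  split_ifs with htop
  · obtain ⟨K, hK, hKtop⟩ := htop
    exact ⟨fun h _ _ => le_top.trans h, fun h => hKtop ▸ h K hK⟩
  · push Not at htop
    have hbdd : BddAbove {o : Ordinal | ∃ K : ℝ, 1 ≤ K ∧
        (o : WithTop Ordinal) = treeRank (embTree x Y K)} := by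
      refine BddAbove.mono ?_ (Ordinal.bddAbove_of_small
        (s := Set.range fun K : ℝ => (treeRank (embTree x Y K)).untopD 0))
      rintro o ⟨K, -, ho⟩
      exact ⟨K, by simp only [← ho, WithTop.untopD_coe]⟩
    induction a using WithTop.recTopCoe with
    | top => simp only [le_top, implies_true]
    | coe a =>
      rw [WithTop.coe_le_coe, csSup_le_iff' hbdd]
      constructor
      · intro h K hK
        obtain ⟨o, ho⟩ := WithTop.ne_top_iff_exists.1 (htop K hK)
        exact ho ▸ WithTop.coe_le_coe.2 (h o ⟨K, hK, ho⟩)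
      · rintro h o ⟨K, hK, ho⟩
        exact WithTop.coe_le_coe.1 (ho ▸ h K hK)

theorem embIndex_mono (x : ℕ → 𝒲) {Y Y' : Set 𝒲} (h : Y ⊆ Y') :
    embIndex x Y ≤ embIndex x Y' := by
  have hsub (K : ℝ) : embTree x Y K ⊆ embTree x Y' K :=
    fun _ hl => ⟨fun v hv => h (hl.1 v hv), hl.2⟩
  exact embIndex_le_iff.2 fun K hK =>
    (treeRank_mono (hsub K)).trans (embIndex_le_iff.1 le_rfl K hK)

theorem embIndex_eq_top {x w : ℕ → 𝒲} {Y : Set 𝒲} {K : ℝ} (hK : 1 ≤ K) (hw : ∀ n, w n ∈ Y)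
    (h : ∀ k, SeqEquiv K k w x) : embIndex x Y = ⊤ := by
  have hbranch : treeRank (embTree x Y K) = ⊤ := by
    refine treeRank_eq_top_of_branch w fun k => ⟨by simpa using fun i _ => hw i, fun a => ?_⟩
    have hsum : ∑ i ∈ Finset.range k, a i • ((List.range k).map w).getD i 0 =
        ∑ i ∈ Finset.range k, a i • w i :=
      Finset.sum_congr rfl fun i hi => by simp [List.getD, Finset.mem_range.1 hi]
    simpa only [List.length_map, List.length_range, hsum] using h k a
  exact top_le_iff.1 (hbranch ▸ embIndex_le_iff.1 le_rfl K hK)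

end Rank

/-! ### Equivalence of sequences and small perturbations -/

section Equivalence

open Finsupp (linearCombination)

variable {ι κ E F G : Type*} [NormedAddCommGroup E] [NormedSpace ℝ E]
  [NormedAddCommGroup F] [NormedSpace ℝ F] [NormedAddCommGroup G] [NormedSpace ℝ G]

/-- Equivalence of two families of vectors, in possibly different normed spaces: for some `K ≥ 1`
the norms of corresponding finite linear combinations are within a factor `K` of each other. For
sequences this is `K`-equivalence of all initial segments at once, stated without division. -/
def EquivSeq (x : ι → E) (y : ι → F) : Prop :=
  ∃ K : ℝ, 1 ≤ K ∧ ∀ c : ι →₀ ℝ,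
    ‖linearCombination ℝ y c‖ ≤ K * ‖linearCombination ℝ x c‖ ∧
    ‖linearCombination ℝ x c‖ ≤ K * ‖linearCombination ℝ y c‖

theorem EquivSeq.symm {x : ι → E} {y : ι → F} (h : EquivSeq x y) : EquivSeq y x :=
  let ⟨K, hK, hc⟩ := h
  ⟨K, hK, fun c => (hc c).symm⟩

theorem EquivSeq.trans {x : ι → E} {y : ι → F} {z : ι → G} (hxy : EquivSeq x y)
    (hyz : EquivSeq y z) : EquivSeq x z := by
  obtain ⟨K, hK, hxy⟩ := hxy
  obtain ⟨L, hL, hyz⟩ := hyz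
  refine ⟨K * L, one_le_mul_of_one_le_of_one_le hK hL, fun c => ⟨?_, ?_⟩⟩
  · calc ‖linearCombination ℝ z c‖ ≤ L * ‖linearCombination ℝ y c‖ := (hyz c).1
      _ ≤ L * (K * ‖linearCombination ℝ x c‖) := by gcongr; exact (hxy c).1
      _ = K * L * ‖linearCombination ℝ x c‖ := by ring
  · calc ‖linearCombination ℝ x c‖ ≤ K * ‖linearCombination ℝ y c‖ := (hxy c).2
      _ ≤ K * (L * ‖linearCombination ℝ z c‖) := by gcongr; exact (hyz c).2
      _ = K * L * ‖linearCombination ℝ z c‖ := by ring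

theorem EquivSeq.linearCombination {x : ι → E} {y : ι → F} (h : EquivSeq x y)
    (b : κ → ι →₀ ℝ) :
    EquivSeq (fun k => linearCombination ℝ x (b k)) (fun k => linearCombination ℝ y (b k)) := by
  obtain ⟨K, hK, hc⟩ := h
  refine ⟨K, hK, fun c => ?_⟩
  simpa only [Finsupp.linearCombination_linearCombination] using
    hc (Finsupp.linearCombination ℝ b c)

theorem equivSeq_map_of_bounds {T : E →ₗ[ℝ] F} {r C : ℝ} (hr : 0 < r)
    (hT : ∀ v, r * ‖v‖ ≤ ‖T v‖ ∧ ‖T v‖ ≤ C * ‖v‖) (x : ι → E) :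
    EquivSeq x (fun i => T (x i)) := by
  refine ⟨max 1 (max C r⁻¹), le_max_left _ _, fun c => ?_⟩
  have hTc : Finsupp.linearCombination ℝ (fun i => T (x i)) c =
      T (Finsupp.linearCombination ℝ x c) := (LinearMap.map_finsupp_linearCombination T c).symm
  rw [hTc]
  obtain ⟨hlower, hupper⟩ := hT (Finsupp.linearCombination ℝ x c)
  refine ⟨hupper.trans ?_, ((le_inv_mul_iff₀ hr).2 hlower).trans ?_⟩
  · gcongr
    exact (le_max_left C _).trans (le_max_right _ _)
  · gcongr
    exact (le_max_right C _).trans (le_max_right _ _)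

theorem EquivSeq.exists_forall_seqEquiv {𝒲 : Type} [NormedAddCommGroup 𝒲] [NormedSpace ℝ 𝒲]
    {x y : ℕ → 𝒲} (h : EquivSeq x y) : ∃ K : ℝ, 1 ≤ K ∧ ∀ k, SeqEquiv K k x y := by
  obtain ⟨K, hK, hc⟩ := h
  refine ⟨K, hK, fun k a => ?_⟩
  have hsum (w : ℕ → 𝒲) : ∑ i ∈ Finset.range k, a i • w i =
      Finsupp.linearCombination ℝ w (∑ i ∈ Finset.range k, Finsupp.single i (a i)) := by
    simp only [map_sum, Finsupp.linearCombination_single]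
  obtain ⟨hupper, hlower⟩ := hc (∑ i ∈ Finset.range k, Finsupp.single i (a i))
  rw [hsum x, hsum y, one_div, inv_mul_le_iff₀ (one_pos.trans_le hK)]
  exact ⟨hlower, hupper⟩

/-- The coefficients of the linear combinations of `(x i)` are bounded functions of the vector, the
`i`-th one by `M i`. By the Hahn–Banach theorem this says that `(x i)` has biorthogonal functionals
of norms at most `M i`; the present form passes directly to equivalent families. -/
def CoeffBounds (x : ι → E) (M : ι → ℝ) : Prop :=
  ∀ (c : ι →₀ ℝ) (i : ι), |c i| ≤ M i * ‖linearCombination ℝ x c‖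

theorem coeffBounds_of_biorthogonal {x : ι → E} {f : ι → E →L[ℝ] ℝ} (hself : ∀ i, f i (x i) = 1)
    (hne : Pairwise fun i j => f i (x j) = 0) : CoeffBounds x (fun i => ‖f i‖) := by
  intro c i
  have hcoeff : f i (Finsupp.linearCombination ℝ x c) = c i := by
    rw [Finsupp.linearCombination_apply, map_finsuppSum, Finsupp.sum_eq_single i]
    · simp [hself]
    · intro j _ hj
      simp [hne hj.symm]
    · simp
  simpa only [hcoeff, Real.norm_eq_abs] using (f i).le_opNorm (Finsupp.linearCombination ℝ x c)

namespace CoeffBounds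

variable {x : ι → E} {M : ι → ℝ}

theorem one_le_mul_norm (h : CoeffBounds x M) (i : ι) : 1 ≤ M i * ‖x i‖ := by
  simpa using h (Finsupp.single i 1) i

theorem pos (h : CoeffBounds x M) (i : ι) : 0 < M i :=
  pos_of_mul_pos_left (one_pos.trans_le (h.one_le_mul_norm i)) (norm_nonneg _)

theorem linearIndependent (h : CoeffBounds x M) : LinearIndependent ℝ x := by
  refine linearIndependent_iff.2 fun c hc => Finsupp.ext fun i => ?_
  simpa [hc] using h c i

theorem exists_of_equivSeq {y : ι → F} (h : CoeffBounds x M) (hxy : EquivSeq x y) :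
    ∃ M' : ι → ℝ, CoeffBounds y M' := by
  obtain ⟨K, -, hK⟩ := hxy
  refine ⟨fun i => M i * K, fun c i => (h c i).trans ?_⟩
  rw [mul_assoc]
  exact mul_le_mul_of_nonneg_left (hK c).2 (h.pos i).le

theorem norm_linearCombination_sub_le (h : CoeffBounds x M) {y : ι → E} {δ : ℝ}
    (hδ : ∀ s : Finset ι, ∑ i ∈ s, M i * ‖y i - x i‖ ≤ δ) (c : ι →₀ ℝ) :
    ‖linearCombination ℝ y c - linearCombination ℝ x c‖ ≤ δ * ‖linearCombination ℝ x c‖ := by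
  set v := Finsupp.linearCombination ℝ x c with hv
  have hdiff : Finsupp.linearCombination ℝ y c - v = ∑ i ∈ c.support, c i • (y i - x i) := by
    simp only [hv, Finsupp.linearCombination_apply, Finsupp.sum, smul_sub, Finset.sum_sub_distrib]
  calc ‖Finsupp.linearCombination ℝ y c - v‖
      ≤ ∑ i ∈ c.support, ‖c i • (y i - x i)‖ := hdiff ▸ norm_sum_le _ _
    _ ≤ ∑ i ∈ c.support, M i * ‖y i - x i‖ * ‖v‖ := by
        refine Finset.sum_le_sum fun i _ => ?_
        rw [norm_smul, Real.norm_eq_abs, mul_right_comm]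
        exact mul_le_mul_of_nonneg_right (h c i) (norm_nonneg _)
    _ = (∑ i ∈ c.support, M i * ‖y i - x i‖) * ‖v‖ := (Finset.sum_mul _ _ _).symm
    _ ≤ δ * ‖v‖ := mul_le_mul_of_nonneg_right (hδ _) (norm_nonneg _)

theorem equivSeq_of_sum_le (h : CoeffBounds x M) {y : ι → E}
    (hxy : ∀ s : Finset ι, ∑ i ∈ s, M i * ‖y i - x i‖ ≤ 1 / 2) : EquivSeq x y := by
  refine ⟨2, one_le_two, fun c => ?_⟩
  have hdiff := h.norm_linearCombination_sub_le hxy c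
  have hy := norm_le_norm_add_norm_sub (Finsupp.linearCombination ℝ x c)
    (Finsupp.linearCombination ℝ y c)
  have hx := norm_le_norm_add_norm_sub' (Finsupp.linearCombination ℝ x c)
    (Finsupp.linearCombination ℝ y c)
  rw [norm_sub_rev] at hdiff
  constructor <;> linarith [norm_nonneg (Finsupp.linearCombination ℝ x c)]

theorem equivSeq_of_le_geometric {x y : ℕ → E} {M : ℕ → ℝ} (h : CoeffBounds x M)
    (hxy : ∀ n, M n * ‖y n - x n‖ ≤ 1 / 4 / 2 ^ n) : EquivSeq x y := by
  have hgeom : HasSum (fun n : ℕ => (1 / 4 / 2 ^ n : ℝ)) (1 / 2) := by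
    simpa only [show (1 / 4 : ℝ) = 1 / 2 / 2 by norm_num] using hasSum_geometric_two' (1 / 2)
  exact h.equivSeq_of_sum_le fun s => (Finset.sum_le_sum fun n _ => hxy n).trans
    (sum_le_hasSum s (fun _ _ => by positivity) hgeom)

theorem exists_equivSeq_mem {x : ℕ → E} {M : ℕ → ℝ} (h : CoeffBounds x M) {S : Submodule ℝ E}
    (hx : ∀ n, x n ∈ S.topologicalClosure) : ∃ y : ℕ → E, (∀ n, y n ∈ S) ∧ EquivSeq x y := by
  have happrox (n : ℕ) : ∃ v ∈ S, M n * ‖v - x n‖ ≤ 1 / 4 / 2 ^ n := by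
    obtain ⟨v, hvS, hv⟩ := Metric.mem_closure_iff.1 (hx n) (1 / 4 / 2 ^ n / M n)
      (div_pos (by positivity) (h.pos n))
    refine ⟨v, hvS, ?_⟩
    rw [dist_comm, dist_eq_norm, lt_div_iff₀' (h.pos n)] at hv
    exact hv.le
  choose y hyS hy using happrox
  exact ⟨y, hyS, h.equivSeq_of_le_geometric hy⟩

end CoeffBounds

end Equivalence

/-! ### Spans, block sequences and tightness -/

section LinearAlgebra

theorem linearIndependent_of_mem_span_image {R M ι κ : Type*} [DivisionRing R] [AddCommGroup M]
    [Module R M] {e : ι → M} (he : LinearIndependent R e) {D : κ → Set ι}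
    (hD : Pairwise (Function.onFun Disjoint D)) {y : κ → M}
    (hy : ∀ k, y k ∈ Submodule.span R (e '' D k)) (hy0 : ∀ k, y k ≠ 0) :
    LinearIndependent R y := by
  have hindep : iSupIndep fun k => Submodule.span R (e '' D k) := by
    intro k
    simp only [← Submodule.span_iUnion, ← Set.image_iUnion]
    refine he.disjoint_span_image ?_
    exact Set.disjoint_iUnion₂_right.2 fun l hl => hD hl.symm
  exact hindep.linearIndependent _ hy hy0

theorem exists_mem_ker_notMem {R V V' : Type*} [DivisionRing R] [AddCommGroup V] [Module R V]
    [AddCommGroup V'] [Module R V'] [FiniteDimensional R V'] {X : Submodule R V}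
    (hX : ¬FiniteDimensional R X) (φ : V →ₗ[R] V') (G : Submodule R V) [FiniteDimensional R G] :
    ∃ x ∈ X, φ x = 0 ∧ x ∉ G := by
  by_contra! hcon
  have hle : X ⊓ φ.ker ≤ G := fun x hx => hcon x hx.1 (LinearMap.mem_ker.1 hx.2)
  have hker : FiniteDimensional R (X ⊓ φ.ker : Submodule R V) :=
    Submodule.finiteDimensional_of_le hle
  exact hX (Module.Finite.iff_fg.2 (Submodule.fg_of_fg_map_of_fg_inf_ker φ
    (IsNoetherian.noetherian _) (Module.Finite.iff_fg.1 hker)))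

theorem exists_dual_eq_one_of_notMem {𝕜 E : Type*} [RCLike 𝕜] [NormedAddCommGroup E]
    [NormedSpace 𝕜 E] {G : Submodule 𝕜 E} (hG : IsClosed (G : Set E)) {x : E} (hx : x ∉ G) :
    ∃ f : E →L[𝕜] 𝕜, f x = 1 ∧ ∀ g ∈ G, f g = 0 := by
  have hx0 : G.mkQL x ≠ 0 := by simpa using hx
  obtain ⟨f, hf⟩ := SeparatingDual.exists_eq_one (R := 𝕜) hx0
  refine ⟨f.comp G.mkQL, hf, fun g hg => ?_⟩
  have hg0 : G.mkQL g = 0 := by simpa using hg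
  rw [ContinuousLinearMap.comp_apply, hg0, map_zero]

end LinearAlgebra

section Combinatorics

theorem exists_infinite_disjoint {ι : Type*} {D I : ℕ → Finset ι}
    (hD : ∀ i, ∀ᶠ n in atTop, i ∉ D n) (hI : ∀ i, ∀ᶠ n in atTop, i ∉ I n) :
    ∃ A B : Set ℕ, A.Infinite ∧ B.Infinite ∧ ∀ m ∈ A, ∀ n ∈ B, Disjoint (I m) (D n) := by
  obtain ⟨φ, -, hφ⟩ := exists_seq_of_forall_finset_exists (fun _ : ℕ => True)
    (fun m n => m < n ∧ (∀ i ∈ I m, i ∉ D n) ∧ ∀ i ∈ D m, i ∉ I n) fun s _ => by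
      have hlater : ∀ m ∈ s, ∀ᶠ n in atTop, m < n ∧ (∀ i ∈ I m, i ∉ D n) ∧ ∀ i ∈ D m, i ∉ I n :=
        fun m _ => (eventually_gt_atTop m).and
          (((I m).eventually_all.2 fun i _ => hD i).and ((D m).eventually_all.2 fun i _ => hI i))
      obtain ⟨n, hn⟩ := (s.eventually_all.2 hlater).exists
      exact ⟨n, trivial, hn⟩
  have hinj : Function.Injective φ := StrictMono.injective fun m n h => (hφ m n h).1
  refine ⟨Set.range fun k => φ (2 * k), Set.range fun k => φ (2 * k + 1),
    Set.infinite_range_of_injective fun a b h => ?_,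
    Set.infinite_range_of_injective fun a b h => ?_, ?_⟩
  · have := hinj h
    omega
  · have := hinj h
    omega
  · rintro _ ⟨a, rfl⟩ _ ⟨b, rfl⟩
    rcases lt_or_gt_of_ne (show 2 * a ≠ 2 * b + 1 by omega) with hab | hab
    · exact Finset.disjoint_left.2 (hφ _ _ hab).2.1
    · exact Finset.disjoint_right.2 (hφ _ _ hab).2.2

variable {D : ℕ → Finset ℕ}

theorem pairwise_disjoint_of_successive (hne : ∀ n, (D n).Nonempty)
    (hD : ∀ n, ∀ i ∈ D n, ∀ j ∈ D (n + 1), i < j) : Pairwise (Function.onFun Disjoint D) := by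
  have hlt {m n : ℕ} (hmn : m < n) : ∀ i ∈ D m, ∀ j ∈ D n, i < j := by
    induction n, hmn using Nat.le_induction with
    | base => exact hD m
    | succ n _ ih =>
      intro i hi j hj
      obtain ⟨k, hk⟩ := hne n
      exact (ih i hi k hk).trans (hD n k hk j hj)
  refine (pairwise_disjoint_on D).2 fun m n hmn => ?_
  exact Finset.disjoint_left.2 fun i hi hi' => lt_irrefl i (hlt hmn i hi i hi')

theorem eventually_notMem_of_successive (hne : ∀ n, (D n).Nonempty)
    (hD : ∀ n, ∀ i ∈ D n, ∀ j ∈ D (n + 1), i < j) (i : ℕ) : ∀ᶠ n in atTop, i ∉ D n := by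
  have hle (n : ℕ) : ∀ j ∈ D n, n ≤ j := by
    induction n with
    | zero => exact fun j _ => j.zero_le
    | succ n ih =>
      intro j hj
      obtain ⟨k, hk⟩ := hne n
      exact (ih k hk).trans_lt (hD n k hk j hj)
  filter_upwards [eventually_gt_atTop i] with n hn hi
  exact hn.not_ge (hle n i hi)

theorem IntervalSeq.nonempty {I : ℕ → Finset ℕ} (hI : IntervalSeq I) (n : ℕ) :
    (I n).Nonempty := by
  obtain ⟨a, b, hab, h⟩ := hI.1 n
  exact h ▸ Finset.nonempty_Icc.2 hab

end Combinatorics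

section BlockSequences

variable {𝒲 : Type} [NormedAddCommGroup 𝒲] [NormedSpace ℝ 𝒲] {b e x y : ℕ → 𝒲}

theorem suppIn_iff_mem_span {v : 𝒲} {s : Finset ℕ} :
    SuppIn b v s ↔ v ∈ Submodule.span ℝ (b '' (s : Set ℕ)) := by
  rw [Submodule.mem_span_image_finset_iff_exists_fun']
  exact exists_congr fun a => eq_comm

theorem SuppIn.nonempty {v : 𝒲} {s : Finset ℕ} (h : SuppIn b v s) (hv : v ≠ 0) : s.Nonempty := by
  rw [Finset.nonempty_iff_ne_empty]
  rintro rfl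
  obtain ⟨_, ha⟩ := h
  exact hv ha

theorem subset_closedSpan (S : Set 𝒲) : S ⊆ closedSpan S :=
  Submodule.subset_span.trans (Submodule.le_topologicalClosure _)

theorem closedSpan_le {S : Set 𝒲} {Y : Submodule ℝ 𝒲} (hSY : S ⊆ Y)
    (hY : IsClosed (Y : Set 𝒲)) : closedSpan S ≤ Y :=
  Submodule.topologicalClosure_minimal _ (Submodule.span_le.2 hSY) hY

theorem isClosed_closedSpan (S : Set 𝒲) : IsClosed (closedSpan S : Set 𝒲) :=
  Submodule.isClosed_topologicalClosure _

theorem closedSpan_mono {S S' : Set 𝒲} (h : S ⊆ S') : closedSpan S ≤ closedSpan S' :=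
  closedSpan_le (h.trans (subset_closedSpan S')) (isClosed_closedSpan S')

theorem not_finiteDimensional_closedSpan_image (hx : LinearIndependent ℝ x) {B : Set ℕ}
    (hB : B.Infinite) : ¬FiniteDimensional ℝ (closedSpan (x '' B)) := by
  intro _
  have hli : LinearIndependent ℝ fun n : B =>
      (⟨x n, subset_closedSpan _ (Set.mem_image_of_mem x n.2)⟩ : closedSpan (x '' B)) :=
    LinearIndependent.of_comp (closedSpan (x '' B)).subtype
      (hx.comp Subtype.val Subtype.val_injective)
  exact hB (Set.finite_coe_iff.1 hli.finite)

theorem SuppIn.mem_residualSpace {I : ℕ → Finset ℕ} {A : Set ℕ} {v : 𝒲} {s : Finset ℕ}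
    (hv : SuppIn b v s) (h : ∀ m ∈ A, Disjoint (I m) s) : v ∈ residualSpace b I A := by
  refine Submodule.le_topologicalClosure _
    (Submodule.span_mono ?_ (suppIn_iff_mem_span.1 hv))
  rintro _ ⟨i, hi, rfl⟩
  exact ⟨i, fun m hm => Finset.disjoint_right.1 (h m hm) hi, rfl⟩

theorem isBlockSeq_self (hy : ∀ n, y n ≠ 0) : IsBlockSeq y y := by
  refine ⟨hy, fun n => {n}, fun n => ⟨1, by simp⟩, fun n i hi j hj => ?_⟩
  rw [Finset.mem_singleton] at hi hj
  omega

theorem IsBlockSeq.linearIndependent (hy : IsBlockSeq e y) (he : LinearIndependent ℝ e) :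
    LinearIndependent ℝ y := by
  obtain ⟨hy0, D, hyD, hD⟩ := hy
  have hdisj := pairwise_disjoint_of_successive (fun n => (hyD n).nonempty (hy0 n)) hD
  refine linearIndependent_of_mem_span_image he (D := fun n => (D n : Set ℕ)) ?_
    (fun n => suppIn_iff_mem_span.1 (hyD n)) hy0
  exact fun m n hmn => Finset.disjoint_coe.2 (hdisj hmn)

theorem IsAlphaTight.exists_infinite_embIndex_le {α : Ordinal} (h : IsAlphaTight e α)
    (hy : IsBlockSeq e y) :
    ∃ B : Set ℕ, B.Infinite ∧ embIndex y (closedSpan (y '' B)) ≤ (α : WithTop Ordinal) := by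
  obtain ⟨I, hI, hemb⟩ := h y hy
  obtain ⟨hy0, D, hyD, hD⟩ := hy
  obtain ⟨A, B, hA, hB, hAB⟩ := exists_infinite_disjoint
    (eventually_notMem_of_successive (fun n => (hyD n).nonempty (hy0 n)) hD)
    (eventually_notMem_of_successive hI.nonempty hI.2)
  refine ⟨B, hB, (embIndex_mono y (closedSpan_le ?_ (isClosed_closedSpan _))).trans (hemb A hA)⟩
  rintro _ ⟨n, hn, rfl⟩
  exact (hyD n).mem_residualSpace fun m hm => hAB m hm n hn

theorem IsAlphaTight.not_isAlphaMinimal {α β : Ordinal} (h : IsAlphaTight e α)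
    (he : LinearIndependent ℝ e) (hy : IsBlockSeq e y) (hαβ : α < β) : ¬IsAlphaMinimal y β := by
  intro hmin
  obtain ⟨B, hB, hle⟩ := h.exists_infinite_embIndex_le hy
  have hge := hmin y (isBlockSeq_self hy.1) (closedSpan (y '' B))
    (closedSpan_mono (Set.image_subset_range y B))
    (not_finiteDimensional_closedSpan_image (hy.linearIndependent he) hB)
  exact hαβ.not_ge (WithTop.coe_le_coe.1 (hge.trans hle))

end BlockSequences

/-! ### Block sequences near a subspace -/

section Selection

variable {𝒲 : Type} [NormedAddCommGroup 𝒲] [NormedSpace ℝ 𝒲] {e : ℕ → 𝒲}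

namespace IsSchauderBasis

/-- The coordinate functionals of a Schauder basis, as plain linear maps: only finitely many
of them at a time have to vanish at a vector, which does not require their continuity. -/
noncomputable def coord (he : IsSchauderBasis e) (i : ℕ) : 𝒲 →ₗ[ℝ] ℝ where
  toFun v := (he v).choose i
  map_add' v w := by
    have h := ((he v).choose_spec.1).add (he w).choose_spec.1
    simp only [← Finset.sum_add_distrib, ← add_smul] at h
    exact (congrFun ((he (v + w)).choose_spec.2 _ h) i).symm
  map_smul' r v := by
    have h := ((he v).choose_spec.1).const_smul r
    simp only [Finset.smul_sum, smul_smul] at h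
    exact (congrFun ((he (r • v)).choose_spec.2 _ h) i).symm

theorem tendsto_sum_coord (he : IsSchauderBasis e) (v : 𝒲) :
    Tendsto (fun N => ∑ i ∈ Finset.range N, he.coord i v • e i) atTop (𝓝 v) :=
  (he v).choose_spec.1

theorem coord_basis (he : IsSchauderBasis e) (i j : ℕ) :
    he.coord i (e j) = if i = j then 1 else 0 := by
  have h : Tendsto (fun N => ∑ i ∈ Finset.range N, (if i = j then (1 : ℝ) else 0) • e i) atTop
      (𝓝 (e j)) := by
    refine tendsto_const_nhds.congr' ?_
    filter_upwards [eventually_gt_atTop j] with N hN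
    simp [hN]
  exact (congrFun ((he (e j)).choose_spec.2 _ h) i).symm

theorem linearIndependent (he : IsSchauderBasis e) : LinearIndependent ℝ e :=
  LinearIndependent.of_pairwise_dual_eq_zero_one e he.coord
    (fun i j hij => (he.coord_basis i j).trans (if_neg hij))
    fun i => (he.coord_basis i i).trans (if_pos rfl)

end IsSchauderBasis

/-- One step of the gliding hump construction in `X`: a vector `vec` of `X` whose expansion starts
at `lo`, and a functional `dual` with value `1` at `vec`, relative to whose norm the truncation of
the expansion to `[lo, hi)` is a good approximation of `vec`. The tolerance is indexed by `lo`
since this is at least `n` for the `n`-th of successive humps. -/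
structure Hump (he : IsSchauderBasis e) (X : Submodule ℝ 𝒲) where
  vec : 𝒲
  dual : 𝒲 →L[ℝ] ℝ
  lo : ℕ
  hi : ℕ
  vec_mem : vec ∈ X
  dual_vec : dual vec = 1
  lo_lt_hi : lo < hi
  norm_mul_le : ‖dual‖ * ‖∑ i ∈ Finset.Ico lo hi, he.coord i vec • e i - vec‖ ≤ 1 / 4 / 2 ^ lo

variable {X : Submodule ℝ 𝒲}

theorem Hump.exists_after (he : IsSchauderBasis e) (hX : ¬FiniteDimensional ℝ X)
    (s : Finset (Hump he X)) :
    ∃ q : Hump he X, ∀ p ∈ s, p.dual q.vec = 0 ∧ q.dual p.vec = 0 ∧ p.hi ≤ q.lo := by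
  let G : Submodule ℝ 𝒲 := Submodule.span ℝ (Hump.vec '' (s : Set (Hump he X)))
  have : FiniteDimensional ℝ G := FiniteDimensional.span_of_finite ℝ (s.finite_toSet.image _)
  let N := s.sup Hump.hi
  obtain ⟨v, hvX, hv0, hvG⟩ := exists_mem_ker_notMem hX
    ((LinearMap.pi fun i : Fin N => he.coord i).prod
      (LinearMap.pi fun p : s => (p.1.dual : 𝒲 →ₗ[ℝ] ℝ))) G
  have hcoord (i : ℕ) (hi : i < N) : he.coord i v = 0 :=
    congrFun (congrArg Prod.fst hv0) ⟨i, hi⟩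
  have hdual (p : Hump he X) (hp : p ∈ s) : p.dual v = 0 :=
    congrFun (congrArg Prod.snd hv0) ⟨p, hp⟩
  obtain ⟨f, hfv, hfG⟩ := exists_dual_eq_one_of_notMem G.closed_of_finiteDimensional hvG
  have htrunc : Tendsto
      (fun M => ‖f‖ * ‖∑ i ∈ Finset.range M, he.coord i v • e i - v‖) atTop (𝓝 0) := by
    simpa using (tendsto_iff_norm_sub_tendsto_zero.1 (he.tendsto_sum_coord v)).const_mul ‖f‖
  obtain ⟨M, hM, hNM⟩ := ((htrunc.eventually_lt_const
    (show (0 : ℝ) < 1 / 4 / 2 ^ N by positivity)).and (eventually_gt_atTop N)).exists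
  have hinitial : ∑ i ∈ Finset.range N, he.coord i v • e i = 0 :=
    Finset.sum_eq_zero fun i hi => by rw [hcoord i (Finset.mem_range.1 hi), zero_smul]
  have hIco : ∑ i ∈ Finset.Ico N M, he.coord i v • e i =
      ∑ i ∈ Finset.range M, he.coord i v • e i := by
    rw [← Finset.sum_range_add_sum_Ico _ hNM.le, hinitial, zero_add]
  refine ⟨⟨v, f, N, M, hvX, hfv, hNM, hIco ▸ hM.le⟩, fun p hp => ⟨hdual p hp, ?_, ?_⟩⟩
  · exact hfG _ (Submodule.subset_span (Set.mem_image_of_mem _ hp))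
  · exact Finset.le_sup hp

theorem exists_equivSeq_isBlockSeq (he : IsSchauderBasis e) (hX : ¬FiniteDimensional ℝ X) :
    ∃ (x z : ℕ → 𝒲) (M : ℕ → ℝ), (∀ n, x n ∈ X) ∧ CoeffBounds x M ∧ IsBlockSeq e z ∧
      EquivSeq x z := by
  obtain ⟨p, -, hp⟩ := exists_seq_of_forall_finset_exists (fun _ : Hump he X => True)
    (fun p q => p.dual q.vec = 0 ∧ q.dual p.vec = 0 ∧ p.hi ≤ q.lo)
    fun s _ => (Hump.exists_after he hX s).imp fun _ h => ⟨trivial, h⟩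
  let x : ℕ → 𝒲 := fun n => (p n).vec
  let z : ℕ → 𝒲 := fun n => ∑ i ∈ Finset.Ico (p n).lo (p n).hi, he.coord i (p n).vec • e i
  have hcoeff : CoeffBounds x fun n => ‖(p n).dual‖ := by
    refine coeffBounds_of_biorthogonal (fun n => (p n).dual_vec) fun m n hmn => ?_
    rcases hmn.lt_or_gt with h | h
    · exact (hp m n h).1
    · exact (hp n m h).2.1
  have hlo : StrictMono fun n => (p n).lo := fun m n h =>
    (p m).lo_lt_hi.trans_le (hp m n h).2.2
  have hnear (n : ℕ) : ‖(p n).dual‖ * ‖z n - x n‖ ≤ 1 / 4 / 2 ^ n := by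
    refine (p n).norm_mul_le.trans ?_
    gcongr
    · exact one_le_two
    · exact hlo.le_apply
  have hxz : EquivSeq x z := hcoeff.equivSeq_of_le_geometric hnear
  obtain ⟨M', hM'⟩ := hcoeff.exists_of_equivSeq hxz
  refine ⟨x, z, _, fun n => (p n).vec_mem, hcoeff, ⟨hM'.linearIndependent.ne_zero,
    fun n => Finset.Ico (p n).lo (p n).hi, fun n => ⟨_, rfl⟩, fun n i hi j hj => ?_⟩, hxz⟩
  exact (Finset.mem_Ico.1 hi).2.trans_le
    ((hp n (n + 1) n.lt_succ_self).2.2.trans (Finset.mem_Ico.1 hj).1)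

end Selection

/-! ### Minimal subspaces -/

section Minimal

variable {𝒲 : Type} [NormedAddCommGroup 𝒲] [NormedSpace ℝ 𝒲] {e x z : ℕ → 𝒲}
  {X : Submodule ℝ 𝒲} {B : Set ℕ}

theorem LinIsoEmbeds.exists_equivSeq {Y : Submodule ℝ 𝒲} (h : LinIsoEmbeds X Y)
    (hx : ∀ n, x n ∈ X) : ∃ y : ℕ → 𝒲, (∀ n, y n ∈ Y) ∧ EquivSeq x y := by
  obtain ⟨T, hTY, r, C, hr, hT⟩ := h
  exact ⟨fun n => T ⟨x n, hx n⟩, fun n => hTY _, (equivSeq_map_of_bounds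
    (T := X.subtype) one_pos (C := 1) (by simp) fun n => ⟨x n, hx n⟩).symm.trans
      (equivSeq_map_of_bounds hr hT _)⟩

theorem EquivSeq.exists_mem_span_image (h : EquivSeq x z) {v : ℕ → 𝒲}
    (hv : ∀ n, v n ∈ Submodule.span ℝ (x '' B)) :
    ∃ w : ℕ → 𝒲, (∀ n, w n ∈ Submodule.span ℝ (z '' B)) ∧ EquivSeq v w := by
  simp only [Finsupp.mem_span_image_iff_linearCombination] at hv ⊢
  choose c hc hcv using hv
  refine ⟨fun n => Finsupp.linearCombination ℝ z (c n), fun n => ⟨c n, hc n, rfl⟩, ?_⟩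
  simpa only [hcv] using h.linearCombination c

theorem IsMinimalSpace.exists_isBlockSeq_embIndex_eq_top (hmin : IsMinimalSpace X)
    (he : IsSchauderBasis e) (hXc : IsClosed (X : Set 𝒲)) (hX : ¬FiniteDimensional ℝ X) :
    ∃ z : ℕ → 𝒲, IsBlockSeq e z ∧
      ∀ B : Set ℕ, B.Infinite → embIndex z (closedSpan (z '' B)) = ⊤ := by
  obtain ⟨x, z, M, hxX, hcoeff, hz, hxz⟩ := exists_equivSeq_isBlockSeq he hX
  refine ⟨z, hz, fun B hB => ?_⟩
  have hYX : closedSpan (x '' B) ≤ X := closedSpan_le (Set.image_subset_iff.2 fun n _ => hxX n) hXc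
  obtain ⟨y, hyY, hxy⟩ := (hmin _ hYX (isClosed_closedSpan _)
    (not_finiteDimensional_closedSpan_image hcoeff.linearIndependent hB)).exists_equivSeq hxX
  obtain ⟨M', hM'⟩ := hcoeff.exists_of_equivSeq hxy
  obtain ⟨v, hv, hyv⟩ := hM'.exists_equivSeq_mem hyY
  obtain ⟨w, hw, hvw⟩ := hxz.exists_mem_span_image hv
  have hwz : EquivSeq w z := (hxy.trans (hyv.trans hvw)).symm.trans hxz
  obtain ⟨K, hK, hseq⟩ := hwz.exists_forall_seqEquiv
  exact embIndex_eq_top hK (fun n => Submodule.le_topologicalClosure _ (hw n)) hseq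

theorem IsAlphaTight.not_isMinimalSpace {α : Ordinal} (h : IsAlphaTight e α)
    (he : IsSchauderBasis e) (hXc : IsClosed (X : Set 𝒲)) (hX : ¬FiniteDimensional ℝ X) :
    ¬IsMinimalSpace X := by
  intro hmin
  obtain ⟨z, hz, htop⟩ := hmin.exists_isBlockSeq_embIndex_eq_top he hXc hX
  obtain ⟨B, hB, hle⟩ := h.exists_infinite_embIndex_le hz
  exact WithTop.coe_ne_top (top_le_iff.1 (htop B hB ▸ hle))

end Minimal

theorem alphaTight_no_beta_minimal_no_minimal_subspace_general {𝒲 : Type}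
    [NormedAddCommGroup 𝒲] [NormedSpace ℝ 𝒲] {e : ℕ → 𝒲} (he : IsSchauderBasis e)
    {α : Ordinal} (htight : IsAlphaTight e α) :
    (∀ y : ℕ → 𝒲, IsBlockSeq e y → ∀ β : Ordinal, α < β → ¬IsAlphaMinimal y β) ∧
    (∀ X : Submodule ℝ 𝒲, IsClosed (X : Set 𝒲) → ¬FiniteDimensional ℝ X →
      ¬IsMinimalSpace X) :=
  ⟨fun _ hy _ hβ => htight.not_isAlphaMinimal he.linearIndependent hy hβ,
    fun _ hXc hX => htight.not_isMinimalSpace he hXc hX⟩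

/-- If `𝒲 = [e n]` is `α`-tight for a countable ordinal `α`, then no block
subspace `[y n]` of `𝒲` is `β`-minimal for any `β > α`, and `𝒲` contains no minimal
infinite-dimensional closed subspace. -/
theorem alphaTight_no_beta_minimal_no_minimal_subspace
    (𝒲 : Type) [NormedAddCommGroup 𝒲] [NormedSpace ℝ 𝒲] [CompleteSpace 𝒲]
    (e : ℕ → 𝒲) (he : IsSchauderBasis e)
    (α : Ordinal) (hα : α < (Cardinal.aleph 1).ord) (htight : IsAlphaTight e α) :
    (∀ y : ℕ → 𝒲, IsBlockSeq e y → ∀ β : Ordinal, α < β → ¬IsAlphaMinimal y β) ∧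
    (∀ X : Submodule ℝ 𝒲, IsClosed (X : Set 𝒲) → ¬FiniteDimensional ℝ X →
      ¬IsMinimalSpace X) :=
  alphaTight_no_beta_minimal_no_minimal_subspace_general he htight

end Rosendal
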